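/- Let a, b ∈ C_c^∞(ℝ²), write them in polar coordinates (r,θ) with θ ∈ (0,π) on the upper half-plane, and set a_r = (a(r,π) + a(r,0))/2. Then |(1/π) ∫₀^∞ ∫₀^π (1/r)(a − a_r) ∂_θ b dθ dr| ≤ C ‖∇a‖_{L²(ℝ²₊)} ‖∇b‖_{L²(ℝ²₊)} for a universal constant C. -/

import Mathlib

/-!
STATEMENT 13.  For a, b ∈ C_c^∞(ℝ²), in polar coordinates on the upper
half-plane, with a_r = (a(r,π) + a(r,0))/2,
|(1/π) ∫₀^∞ ∫₀^π (1/r)(a − a_r) ∂_θ b dθ dr| ≤ C ‖∇a‖_{L²(ℝ²₊)} ‖∇b‖_{L²(ℝ²₊)}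
for a universal constant C.
-/

noncomputable section
open MeasureTheory Real Filter Set ENNReal

/-- The open upper half-plane `ℝ²₊`. -/
def UHP : Set (ℝ × ℝ) := {p : ℝ × ℝ | 0 < p.2}

/-- First partial derivative. -/
def pd1 (f : ℝ × ℝ → ℝ) (p : ℝ × ℝ) : ℝ := fderiv ℝ f p (1, 0)

/-- Second partial derivative. -/
def pd2 (f : ℝ × ℝ → ℝ) (p : ℝ × ℝ) : ℝ := fderiv ℝ f p (0, 1)

/-- The angular derivative `∂_θ` of `b` at the point with polar coordinates `(r, θ)`. -/
def angDeriv (b : ℝ × ℝ → ℝ) (r θ : ℝ) : ℝ :=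
  deriv (fun t => b (r * Real.cos t, r * Real.sin t)) θ

def gsq (f : ℝ × ℝ → ℝ) (p : ℝ × ℝ) : ℝ := (pd1 f p) ^ 2 + (pd2 f p) ^ 2

def Hf (f : ℝ × ℝ → ℝ) (r : ℝ) : ℝ :=
  ∫ θ in Set.Ioo (0 : ℝ) π, r * gsq f (r * Real.cos θ, r * Real.sin θ)

lemma gsq_cont {f : ℝ × ℝ → ℝ} (hf : ContDiff ℝ (⊤ : ℕ∞) f) : Continuous (gsq f) := by
  have h : Continuous (fderiv ℝ f) := hf.continuous_fderiv (by simp)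
  unfold gsq pd1 pd2
  fun_prop

lemma gsq_bdd {f : ℝ × ℝ → ℝ} (hc : HasCompactSupport f) :
    ∃ R : ℝ, ∀ r θ : ℝ, R < r → gsq f (r * Real.cos θ, r * Real.sin θ) = 0 := by
  have h2 : HasCompactSupport (fderiv ℝ f) := hc.fderiv (𝕜 := ℝ)
  obtain ⟨R, hR⟩ := h2.isCompact.isBounded.subset_closedBall (0 : ℝ × ℝ)
  refine ⟨2 * |R|, fun r θ hr => ?_⟩
  have : fderiv ℝ f (r * Real.cos θ, r * Real.sin θ) = 0 := by
    apply image_eq_zero_of_notMem_tsupport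
    intro hm
    have := hR hm
    simp only [Metric.mem_closedBall, dist_zero_right, Prod.norm_mk, Real.norm_eq_abs,
      sup_le_iff] at this
    obtain ⟨h1, h2⟩ := this
    have e1 := (h1.trans (le_abs_self R))
    have e2 := (h2.trans (le_abs_self R))
    have e3 := sq_le_sq.2 (e1.trans (le_abs_self _))
    have e4 := sq_le_sq.2 (e2.trans (le_abs_self _))
    have := Real.sin_sq_add_cos_sq θ
    have h0 := abs_nonneg R
    have e5 : r ^ 2 = (r * Real.cos θ) ^ 2 + (r * Real.sin θ) ^ 2 := by
      linear_combination (-r ^ 2) * this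
    nlinarith
  simp [gsq, pd1, pd2, this]

lemma gsq_int {f : ℝ × ℝ → ℝ} (hf : ContDiff ℝ (⊤ : ℕ∞) f) (hc : HasCompactSupport f) :
    IntegrableOn (fun p : ℝ × ℝ => p.1 * gsq f (p.1 * Real.cos p.2, p.1 * Real.sin p.2))
      (Set.Ioi 0 ×ˢ Set.Ioo 0 π) (volume.prod volume) := by
  obtain ⟨R, hR⟩ := gsq_bdd hc
  have hg := gsq_cont hf
  have h1 : IntegrableOn (fun p : ℝ × ℝ => p.1 * gsq f (p.1 * Real.cos p.2, p.1 * Real.sin p.2))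
      (Set.Icc 0 R ×ˢ Set.Icc 0 π) (volume.prod volume) := by
    apply ContinuousOn.integrableOn_compact (isCompact_Icc.prod isCompact_Icc)
    apply Continuous.continuousOn
    fun_prop
  refine h1.of_forall_diff_eq_zero (measurableSet_Ioi.prod measurableSet_Ioo) ?_
  rintro ⟨r, θ⟩ ⟨⟨h2, h3⟩, h4⟩
  simp only [Set.mem_Ioi, Set.mem_Ioo, Set.mem_prod, Set.mem_Icc, not_and_or] at *
  have : R < r := by
    by_contra hcon
    push Not at hcon
    rcases h4 with h | h
    · rcases h with h | h <;> linarith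
    · rcases h with h | h <;> linarith
  simp [hR r θ this]

lemma Hf_int {f : ℝ × ℝ → ℝ} (hf : ContDiff ℝ (⊤ : ℕ∞) f) (hc : HasCompactSupport f) :
    IntegrableOn (Hf f) (Set.Ioi 0) := by
  have h := gsq_int hf hc
  rw [IntegrableOn, ← Measure.prod_restrict] at h
  exact h.integral_prod_left

lemma Hf_integral {f : ℝ × ℝ → ℝ} (hf : ContDiff ℝ (⊤ : ℕ∞) f) (hc : HasCompactSupport f) :
    ∫ r in Set.Ioi (0 : ℝ), Hf f r = ∫ p in UHP, gsq f p := by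
  have hU : MeasurableSet UHP := measurableSet_lt measurable_const measurable_snd
  unfold Hf
  rw [← setIntegral_prod _ (gsq_int hf hc), ← integral_indicator hU,
    ← integral_comp_polarCoord_symm, ← integral_indicator (measurableSet_Ioi.prod measurableSet_Ioo),
    ← integral_indicator polarCoord.open_target.measurableSet]
  apply integral_congr_ae
  refine Filter.Eventually.of_forall ?_
  rintro ⟨r, θ⟩
  simp only [Set.indicator, polarCoord_target, polarCoord_symm_apply, UHP, Set.mem_prod,
    Set.mem_Ioi, Set.mem_Ioo, Set.mem_setOf_eq, smul_eq_mul]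
  by_cases hr : 0 < r
  · by_cases h1 : 0 < θ ∧ θ < π
    · have : 0 < r * Real.sin θ := mul_pos hr (Real.sin_pos_of_pos_of_lt_pi h1.1 h1.2)
      have h3 : -π < θ := by linarith [Real.pi_pos, h1.1]
      simp [hr, h1, this, h3]
    · by_cases h2 : -π < θ ∧ θ < π
      · have h3 : θ ≤ 0 := by
          by_contra h
          exact h1 ⟨not_le.1 h, h2.2⟩
        have h4 : ¬ 0 < r * Real.sin θ := by
          have := Real.sin_nonpos_of_nonpos_of_neg_pi_le h3 h2.1.le
          nlinarith
        simp [h1, h4]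
      · simp [h1, h2]
  · simp [hr]

lemma ang_hasDeriv {f : ℝ × ℝ → ℝ} (hf : ContDiff ℝ (⊤ : ℕ∞) f) (r θ : ℝ) :
    HasDerivAt (fun t => f (r * Real.cos t, r * Real.sin t))
      (pd1 f (r * Real.cos θ, r * Real.sin θ) * (-(r * Real.sin θ))
        + pd2 f (r * Real.cos θ, r * Real.sin θ) * (r * Real.cos θ)) θ := by
  have h1 : HasDerivAt (fun t => (r * Real.cos t, r * Real.sin t))
      (r * -Real.sin θ, r * Real.cos θ) θ :=
    ((Real.hasDerivAt_cos θ).const_mul r).prodMk ((Real.hasDerivAt_sin θ).const_mul r)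
  have h2 := (hf.differentiable (by simp) (r * Real.cos θ, r * Real.sin θ)).hasFDerivAt
  have h3 := h2.comp_hasDerivAt θ h1
  refine h3.congr_deriv ?_
  have : ((r * -Real.sin θ, r * Real.cos θ) : ℝ × ℝ)
      = (-(r * Real.sin θ)) • (1, 0) + (r * Real.cos θ) • (0, 1) := by
    ext <;> simp
  rw [this, map_add, map_smul, map_smul]
  simp only [pd1, pd2, smul_eq_mul]
  ring

lemma ang_cont {f : ℝ × ℝ → ℝ} (hf : ContDiff ℝ (⊤ : ℕ∞) f) (r : ℝ) :
    Continuous (angDeriv f r) := by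
  have : angDeriv f r = fun θ => _ := funext fun θ => (ang_hasDeriv hf r θ).deriv
  rw [this]
  have h : Continuous (fderiv ℝ f) := hf.continuous_fderiv (by simp)
  unfold pd1 pd2
  fun_prop

lemma ang_sq {f : ℝ × ℝ → ℝ} (hf : ContDiff ℝ (⊤ : ℕ∞) f) (r θ : ℝ) :
    (angDeriv f r θ) ^ 2 ≤ r ^ 2 * gsq f (r * Real.cos θ, r * Real.sin θ) := by
  rw [show angDeriv f r θ = _ from (ang_hasDeriv hf r θ).deriv]
  unfold gsq
  generalize pd1 f _ = x
  generalize pd2 f _ = y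
  have h := Real.sin_sq_add_cos_sq θ
  have : r ^ 2 * (x ^ 2 + y ^ 2) = r ^ 2 * (x ^ 2 + y ^ 2) * (sin θ ^ 2 + cos θ ^ 2) := by
    rw [h, mul_one]
  rw [this]
  nlinarith [sq_nonneg (r * (x * cos θ + y * sin θ))]

def Af (f : ℝ × ℝ → ℝ) (r : ℝ) : ℝ := ∫ θ in (0 : ℝ)..π, |angDeriv f r θ|

lemma Af_nonneg (f : ℝ × ℝ → ℝ) (r : ℝ) : 0 ≤ Af f r :=
  intervalIntegral.integral_nonneg Real.pi_pos.le fun _ _ => abs_nonneg _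

lemma Af_sq {f : ℝ × ℝ → ℝ} (hf : ContDiff ℝ (⊤ : ℕ∞) f) {r : ℝ} (hr : 0 < r) :
    (Af f r) ^ 2 ≤ π * (r * Hf f r) := by
  have hc := ang_cont hf r
  have hg := gsq_cont hf
  have hpi := Real.pi_pos
  set A := Af f r with hA
  have h1 : 0 ≤ ∫ θ in (0 : ℝ)..π, (|angDeriv f r θ| - A / π) ^ 2 :=
    intervalIntegral.integral_nonneg hpi.le fun _ _ => sq_nonneg _
  have h2 : ∫ θ in (0 : ℝ)..π, (|angDeriv f r θ| - A / π) ^ 2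
      = (∫ θ in (0 : ℝ)..π, (angDeriv f r θ) ^ 2) - A ^ 2 / π := by
    have : (fun θ => (|angDeriv f r θ| - A / π) ^ 2)
        = fun θ => ((angDeriv f r θ) ^ 2 - (2 * (A / π)) * |angDeriv f r θ|) + (A / π) ^ 2 := by
      funext θ
      rw [← sq_abs (angDeriv f r θ)]
      ring
    rw [this, intervalIntegral.integral_add, intervalIntegral.integral_sub,
      intervalIntegral.integral_const_mul, intervalIntegral.integral_const]
    · rw [show (∫ θ in (0 : ℝ)..π, |angDeriv f r θ|) = A from rfl]
      simp only [smul_eq_mul]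
      field_simp
      ring
    all_goals
      apply Continuous.intervalIntegrable
      fun_prop
  have h3 : (∫ θ in (0 : ℝ)..π, (angDeriv f r θ) ^ 2) ≤ r * Hf f r := by
    unfold Hf
    rw [← integral_Ioc_eq_integral_Ioo, ← intervalIntegral.integral_of_le hpi.le,
      ← intervalIntegral.integral_const_mul]
    apply intervalIntegral.integral_mono_on hpi.le
    · apply Continuous.intervalIntegrable
      fun_prop
    · apply Continuous.intervalIntegrable
      fun_prop
    · intro θ _
      have := ang_sq hf r θ
      nlinarith
  have h4 : A ^ 2 / π ≤ r * Hf f r := by linarith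
  rw [div_le_iff₀ hpi] at h4
  linarith

lemma diff_le {f : ℝ × ℝ → ℝ} (hf : ContDiff ℝ (⊤ : ℕ∞) f) (r : ℝ) {θ : ℝ}
    (hθ : θ ∈ Set.Ioo 0 π) :
    |f (r * Real.cos θ, r * Real.sin θ) - (f (r, 0) + f (-r, 0)) / 2| ≤ Af f r := by
  have hc := ang_cont hf r
  have hd : ∀ t, HasDerivAt (fun t => f (r * Real.cos t, r * Real.sin t)) (angDeriv f r t) t :=
    fun t => (ang_hasDeriv hf r t).differentiableAt.hasDerivAt
  have e1 := intervalIntegral.integral_eq_sub_of_hasDerivAt (a := 0) (b := θ) (fun t _ => hd t)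
    (hc.intervalIntegrable _ _)
  have e2 := intervalIntegral.integral_eq_sub_of_hasDerivAt (a := θ) (b := π) (fun t _ => hd t)
    (hc.intervalIntegrable _ _)
  simp only [Real.cos_zero, Real.sin_zero, mul_one, mul_zero, Real.cos_pi, Real.sin_pi,
    mul_neg] at e1 e2
  have b1 := intervalIntegral.abs_integral_le_integral_abs (f := angDeriv f r) (μ := volume)
    hθ.1.le
  have b2 := intervalIntegral.abs_integral_le_integral_abs (f := angDeriv f r) (μ := volume)
    hθ.2.le
  have s : (∫ t in (0 : ℝ)..θ, |angDeriv f r t|) + (∫ t in θ..π, |angDeriv f r t|) = Af f r :=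
    intervalIntegral.integral_add_adjacent_intervals
      (hc.abs.intervalIntegrable _ _) (hc.abs.intervalIntegrable _ _)
  rw [e1] at b1
  rw [e2] at b2
  have hn := Af_nonneg f r
  rw [abs_le] at *
  constructor <;> linarith [b1.1, b1.2, b2.1, b2.2]

lemma inner_le {a b : ℝ × ℝ → ℝ} (ha : ContDiff ℝ (⊤ : ℕ∞) a) (hb : ContDiff ℝ (⊤ : ℕ∞) b)
    {r t : ℝ} (hr : 0 < r) (ht : 0 < t) :
    ‖∫ θ in Set.Ioo (0 : ℝ) π,
            (1 / r) * ((a (r * Real.cos θ, r * Real.sin θ) - (a (r, 0) + a (-r, 0)) / 2)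
              * angDeriv b r θ)‖ ≤ π / 2 * (t * Hf a r + t⁻¹ * Hf b r) := by
  have hc := ang_cont hb r
  have hi : IntegrableOn (fun θ => 1 / r * (Af a r * |angDeriv b r θ|)) (Set.Ioo 0 π) := by
    have : Continuous (fun θ => 1 / r * (Af a r * |angDeriv b r θ|)) := by fun_prop
    exact (this.integrableOn_Icc).mono_set Set.Ioo_subset_Icc_self
  have h1 : ‖∫ θ in Set.Ioo (0 : ℝ) π,
            (1 / r) * ((a (r * Real.cos θ, r * Real.sin θ) - (a (r, 0) + a (-r, 0)) / 2)
              * angDeriv b r θ)‖ ≤ ∫ θ in Set.Ioo (0 : ℝ) π, 1 / r * (Af a r * |angDeriv b r θ|) := by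
    apply norm_integral_le_of_norm_le hi
    filter_upwards [ae_restrict_mem measurableSet_Ioo] with θ hθ
    rw [Real.norm_eq_abs, abs_mul, abs_mul, abs_of_pos (one_div_pos.2 hr)]
    have := diff_le ha r hθ
    gcongr
  refine h1.trans ?_
  rw [integral_const_mul, integral_const_mul, ← integral_Ioc_eq_integral_Ioo,
    ← intervalIntegral.integral_of_le Real.pi_pos.le]
  change 1 / r * (Af a r * Af b r) ≤ _
  have ea := Af_sq ha hr
  have eb := Af_sq hb hr
  have hti : 0 < t⁻¹ := inv_pos.2 ht
  have key : 2 * (Af a r * Af b r) ≤ t * (Af a r) ^ 2 + t⁻¹ * (Af b r) ^ 2 := by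
    have h := mul_nonneg hti.le (sq_nonneg (t * Af a r - Af b r))
    have : t⁻¹ * (t * Af a r - Af b r) ^ 2
      = t * (Af a r) ^ 2 + t⁻¹ * (Af b r) ^ 2 - 2 * (Af a r * Af b r) := by
      field_simp
      ring
    linarith
  have k1 := mul_le_mul_of_nonneg_left ea ht.le
  have k2 := mul_le_mul_of_nonneg_left eb hti.le
  rw [one_div, inv_mul_le_iff₀ hr]
  nlinarith

lemma opt {X P Q : ℝ} (hP : 0 ≤ P) (hQ : 0 ≤ Q)
    (h : ∀ t : ℝ, 0 < t → X ≤ 1 / 2 * (t * P + t⁻¹ * Q)) : X ≤ √P * √Q := by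
  have key : ∀ ε : ℝ, 0 < ε → X ≤ √P * √Q + ε * (√P + √Q) := by
    intro ε hε
    have hp := Real.sqrt_nonneg P
    have hq := Real.sqrt_nonneg Q
    have h1 := h ((√Q + ε) / (√P + ε)) (by positivity)
    have hP' := Real.mul_self_sqrt hP
    have hQ' := Real.mul_self_sqrt hQ
    have e1 : (√Q + ε) / (√P + ε) * P ≤ (√Q + ε) * √P := by
      rw [div_mul_eq_mul_div, div_le_iff₀ (by positivity), mul_assoc]
      apply mul_le_mul_of_nonneg_left _ (by positivity)
      nlinarith
    have e2 : ((√Q + ε) / (√P + ε))⁻¹ * Q ≤ (√P + ε) * √Q := by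
      rw [inv_div, div_mul_eq_mul_div, div_le_iff₀ (by positivity), mul_assoc]
      apply mul_le_mul_of_nonneg_left _ (by positivity)
      nlinarith
    nlinarith
  apply _root_.le_of_forall_pos_le_add
  intro δ hδ
  have hp := Real.sqrt_nonneg P
  have hq := Real.sqrt_nonneg Q
  refine (key (δ / (√P + √Q + 1)) (by positivity)).trans ?_
  gcongr
  rw [div_mul_eq_mul_div, div_le_iff₀ (by positivity)]
  nlinarith

/-- **The symmetrized part of the boundary representation is controlled by
`‖∇a‖_{L²} ‖∇b‖_{L²}`.** -/
theorem polar_symmetrized_estimate :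
    ∃ C : ℝ, 0 < C ∧
      ∀ a b : ℝ × ℝ → ℝ,
        ContDiff ℝ (⊤ : ℕ∞) a → HasCompactSupport a →
        ContDiff ℝ (⊤ : ℕ∞) b → HasCompactSupport b →
        |(1 / π) * ∫ r in Set.Ioi (0 : ℝ), ∫ θ in Set.Ioo (0 : ℝ) π,
            (1 / r) * ((a (r * Real.cos θ, r * Real.sin θ) - (a (r, 0) + a (-r, 0)) / 2)
              * angDeriv b r θ)|
          ≤ C * Real.sqrt (∫ p in UHP, ((pd1 a p) ^ 2 + (pd2 a p) ^ 2))
              * Real.sqrt (∫ p in UHP, ((pd1 b p) ^ 2 + (pd2 b p) ^ 2)) := by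
  refine ⟨1, one_pos, fun a b ha hac hb hbc => ?_⟩
  rw [one_mul]
  have hpi := Real.pi_pos
  refine opt (integral_nonneg fun p => by positivity) (integral_nonneg fun p => by positivity) ?_
  intro t ht
  have hI : IntegrableOn (fun r => π / 2 * (t * Hf a r + t⁻¹ * Hf b r)) (Set.Ioi 0) :=
    (((Hf_int ha hac).const_mul t).add ((Hf_int hb hbc).const_mul t⁻¹)).const_mul _
  have h1 := norm_integral_le_of_norm_le (μ := volume.restrict (Set.Ioi (0 : ℝ)))
    (f := fun r => ∫ θ in Set.Ioo (0 : ℝ) π,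
            (1 / r) * ((a (r * Real.cos θ, r * Real.sin θ) - (a (r, 0) + a (-r, 0)) / 2)
              * angDeriv b r θ)) hI (by
      filter_upwards [ae_restrict_mem measurableSet_Ioi] with r hr
      exact inner_le ha hb hr ht)
  rw [integral_const_mul, integral_add ((Hf_int ha hac).const_mul t)
    ((Hf_int hb hbc).const_mul t⁻¹), integral_const_mul, integral_const_mul,
    Hf_integral ha hac, Hf_integral hb hbc, Real.norm_eq_abs] at h1
  rw [abs_mul, abs_of_pos (one_div_pos.2 hpi), one_div, inv_mul_le_iff₀ hpi]
  refine h1.trans (le_of_eq ?_)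
  simp only [gsq]
  ring
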